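/- arXiv:1504.02653 — 7 statements merged into one kernel-verified Lean document; each statement's English description precedes it below -/
import Mathlib

section
/- Let W be a complex vector space, let V_ℝ ⊆ W be a real subspace (an ℝ-submodule of W viewed as a real vector space), and let f : ℂ ⊗[ℝ] V_ℝ → W be the ℂ-linear map induced by the inclusion (z ⊗ v ↦ z • v). Set V_ℂ := {v ∈ V_ℝ | i • v ∈ V_ℝ}. Then the kernel of f equals the set {i ⊗ v − 1 ⊗ (i • v) | v ∈ V_ℂ}. -/
open TensorProduct

/-- Let `W` be a complex vector space, `V_ℝ ⊆ W` a real subspace, and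
`f : ℂ ⊗[ℝ] V_ℝ →ₗ[ℂ] W` the ℂ-linear map induced by the inclusion (`z ⊗ v ↦ z • v`).
With `V_ℂ := {v ∈ V_ℝ | i • v ∈ V_ℝ}`, the kernel of `f` equals
`{i ⊗ v − 1 ⊗ (i • v) | v ∈ V_ℂ}`. -/
theorem stmt_0 (W : Type*) [AddCommGroup W] [Module ℝ W] [Module ℂ W]
    [IsScalarTower ℝ ℂ W] (Vr : Submodule ℝ W) :
    (LinearMap.ker (LinearMap.liftBaseChange ℂ Vr.subtype) : Set (ℂ ⊗[ℝ] ↥Vr)) =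
      {x : ℂ ⊗[ℝ] ↥Vr | ∃ (v : ↥Vr) (hv : Complex.I • (v : W) ∈ Vr),
        x = Complex.I ⊗ₜ[ℝ] v - (1 : ℂ) ⊗ₜ[ℝ] (⟨Complex.I • (v : W), hv⟩ : ↥Vr)} := by
  have key : ∀ x : ℂ ⊗[ℝ] ↥Vr, ∃ a b : ↥Vr,
      x = (1 : ℂ) ⊗ₜ[ℝ] a + Complex.I ⊗ₜ[ℝ] b := by
    intro x
    induction x using TensorProduct.induction_on with
    | zero => exact ⟨0, 0, by simp⟩
    | tmul z v =>
      refine ⟨z.re • v, z.im • v, ?_⟩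
      rw [← TensorProduct.smul_tmul, ← TensorProduct.smul_tmul, ← TensorProduct.add_tmul]
      congr 1
      apply Complex.ext <;> simp
    | add x y hx hy =>
      obtain ⟨a, b, rfl⟩ := hx
      obtain ⟨c, d, rfl⟩ := hy
      refine ⟨a + c, b + d, ?_⟩
      rw [TensorProduct.tmul_add, TensorProduct.tmul_add]
      abel
  ext x
  simp only [SetLike.mem_coe, LinearMap.mem_ker, Set.mem_setOf_eq]
  constructor
  · intro hx
    obtain ⟨a, b, rfl⟩ := key x
    simp only [map_add, LinearMap.liftBaseChange_tmul, Submodule.subtype_apply, one_smul] at hx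
    have h : Complex.I • (b : W) = ((-a : ↥Vr) : W) := by
      rw [Submodule.coe_neg]
      exact eq_neg_of_add_eq_zero_right hx
    have hv : Complex.I • (b : W) ∈ Vr := h ▸ (-a).2
    refine ⟨b, hv, ?_⟩
    have e : (⟨Complex.I • (b : W), hv⟩ : ↥Vr) = -a := Subtype.ext h
    rw [e, TensorProduct.tmul_neg]
    abel
  · rintro ⟨v, hv, rfl⟩
    simp [LinearMap.liftBaseChange_tmul]
end

section
/- Let W be a complex vector space, let V_ℝ ⊆ W be a real subspace, let f : ℂ ⊗[ℝ] V_ℝ → W be the ℂ-linear map induced by the inclusion (z ⊗ v ↦ z • v), and set V_ℂ := {v ∈ V_ℝ | i • v ∈ V_ℝ}. Then the map φ : V_ℂ → ker f given by φ(v) = i ⊗ v − 1 ⊗ (i • v) is an ℝ-linear bijection onto the kernel of f which is conjugate-linear with respect to the complex structures, i.e. φ(i • v) = −i • φ(v) for all v ∈ V_ℂ. In particular ker f is isomorphic to the complex conjugate space of V_ℂ. -/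
open TensorProduct

/-- Every element of the complexification is `1 ⊗ a + i ⊗ b`. -/
theorem exists_re_im {V : Type*} [AddCommGroup V] [Module ℝ V] (x : ℂ ⊗[ℝ] V) :
    ∃ a b : V, x = (1 : ℂ) ⊗ₜ[ℝ] a + Complex.I ⊗ₜ[ℝ] b := by
  induction x using TensorProduct.induction_on with
  | zero => exact ⟨0, 0, by simp⟩
  | tmul z v =>
    refine ⟨z.re • v, z.im • v, ?_⟩
    rw [← TensorProduct.smul_tmul, ← TensorProduct.smul_tmul, ← TensorProduct.add_tmul]
    congr 1
    apply Complex.ext <;> simp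
  | add x y hx hy =>
    obtain ⟨a, b, rfl⟩ := hx
    obtain ⟨c, d, rfl⟩ := hy
    refine ⟨a + c, b + d, ?_⟩
    rw [TensorProduct.tmul_add, TensorProduct.tmul_add]
    abel

/-- With `W`, `V_ℝ`, `f := liftBaseChange ℂ Vr.subtype` and
`V_ℂ := {v ∈ V_ℝ | i • v ∈ V_ℝ}` as in the paper, the map
`φ : V_ℂ → ℂ ⊗[ℝ] V_ℝ`, `φ(v) = i ⊗ v − 1 ⊗ (i • v)`, is ℝ-linear, injective,
has range exactly `ker f`, and is conjugate-linear: `φ(i • v) = −i • φ(v)`.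
In particular `ker f` is isomorphic to the complex conjugate space of `V_ℂ`. -/
theorem stmt_1 (W : Type*) [AddCommGroup W] [Module ℝ W] [Module ℂ W]
    [IsScalarTower ℝ ℂ W] (Vr : Submodule ℝ W)
    (φ : {v : W // v ∈ Vr ∧ Complex.I • v ∈ Vr} → ℂ ⊗[ℝ] ↥Vr)
    (hφ : φ = fun v => Complex.I ⊗ₜ[ℝ] (⟨v.1, v.2.1⟩ : ↥Vr)
        - (1 : ℂ) ⊗ₜ[ℝ] (⟨Complex.I • v.1, v.2.2⟩ : ↥Vr)) :
    (∀ (v w : {v : W // v ∈ Vr ∧ Complex.I • v ∈ Vr})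
        (h : v.1 + w.1 ∈ Vr ∧ Complex.I • (v.1 + w.1) ∈ Vr),
        φ ⟨v.1 + w.1, h⟩ = φ v + φ w) ∧
    (∀ (r : ℝ) (v : {v : W // v ∈ Vr ∧ Complex.I • v ∈ Vr})
        (h : r • v.1 ∈ Vr ∧ Complex.I • (r • v.1) ∈ Vr),
        φ ⟨r • v.1, h⟩ = r • φ v) ∧
    Function.Injective φ ∧
    Set.range φ = ↑(LinearMap.ker (LinearMap.liftBaseChange ℂ Vr.subtype)) ∧
    (∀ (v : {v : W // v ∈ Vr ∧ Complex.I • v ∈ Vr})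
        (h : Complex.I • v.1 ∈ Vr ∧ Complex.I • (Complex.I • v.1) ∈ Vr),
        φ ⟨Complex.I • v.1, h⟩ = (-Complex.I) • φ v) := by
  have hc : ∀ (r : ℝ) (w : W), Complex.I • (r • w) = r • (Complex.I • w) := by
    intro r w
    rw [← algebraMap_smul ℂ r w, ← algebraMap_smul ℂ r (Complex.I • w), smul_comm]
  have hII : ∀ w : W, Complex.I • (Complex.I • w) = -w := by
    intro w
    rw [smul_smul, Complex.I_mul_I, neg_one_smul]
  subst hφ
  refine ⟨?_, ?_, ?_, ?_, ?_⟩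
  · intro v w h
    have h1 : (⟨v.1 + w.1, h.1⟩ : ↥Vr) = ⟨v.1, v.2.1⟩ + ⟨w.1, w.2.1⟩ := rfl
    have h2 : (⟨Complex.I • (v.1 + w.1), h.2⟩ : ↥Vr)
        = ⟨Complex.I • v.1, v.2.2⟩ + ⟨Complex.I • w.1, w.2.2⟩ :=
      Subtype.ext (smul_add _ _ _)
    simp only [h1, h2, TensorProduct.tmul_add]
    abel
  · intro r v h
    have h1 : (⟨r • v.1, h.1⟩ : ↥Vr) = r • ⟨v.1, v.2.1⟩ := rfl
    have h2 : (⟨Complex.I • (r • v.1), h.2⟩ : ↥Vr) = r • ⟨Complex.I • v.1, v.2.2⟩ :=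
      Subtype.ext (hc _ _)
    simp only [h1, h2, TensorProduct.tmul_smul, smul_sub]
  · intro v w h
    have h' := congrArg
      (fun x => TensorProduct.lid ℝ ↥Vr (LinearMap.rTensor ↥Vr Complex.imLm x)) h
    simp at h'
    exact Subtype.ext h'
  · ext x
    constructor
    · rintro ⟨v, rfl⟩
      simp
    · intro hx
      obtain ⟨a, b, rfl⟩ := exists_re_im x
      have hx' : (a : W) + Complex.I • (b : W) = 0 := by simpa using hx
      have hb : Complex.I • (b : W) = ((-a : ↥Vr) : W) := by
        rw [Submodule.coe_neg]
        exact eq_neg_of_add_eq_zero_right hx'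
      refine ⟨⟨b, b.2, hb ▸ (-a).2⟩, ?_⟩
      have h2 : ∀ h, (⟨Complex.I • (b : W), h⟩ : ↥Vr) = -a := fun h => Subtype.ext hb
      simp only [h2, TensorProduct.tmul_neg]
      abel
  · intro v h
    have h2 : (⟨Complex.I • (Complex.I • v.1), h.2⟩ : ↥Vr) = -⟨v.1, v.2.1⟩ :=
      Subtype.ext (hII _)
    simp only [h2, TensorProduct.tmul_neg, smul_sub, TensorProduct.smul_tmul', smul_eq_mul,
      neg_mul, Complex.I_mul_I, mul_one, neg_neg, TensorProduct.neg_tmul]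
    abel
end

section
/- Let W be a complex vector space, let V_ℝ ⊆ W be a real subspace, and set V_ℂ := {v ∈ V_ℝ | i • v ∈ V_ℝ} and V := span_ℂ(V_ℝ) ⊆ W. Then V_ℂ is a complex subspace of W contained in V_ℝ, and the canonical ℂ-linear map ℂ ⊗[ℝ] (V_ℝ / V_ℂ) → V / V_ℂ (induced by z ⊗ [v] ↦ [z • v]) is bijective. In other words, (V, V_ℝ, V_ℂ) is a general mixed super vector space. -/
open TensorProduct

theorem tensor_decomp_aux (Q : Type*) [AddCommGroup Q] [Module ℝ Q] (t : ℂ ⊗[ℝ] Q) :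
    ∃ a b : Q, t = (1 : ℂ) ⊗ₜ[ℝ] a + Complex.I ⊗ₜ[ℝ] b := by
  induction t using TensorProduct.induction_on with
  | zero => exact ⟨0, 0, by simp⟩
  | tmul z q =>
    refine ⟨z.re • q, z.im • q, ?_⟩
    rw [← TensorProduct.smul_tmul, ← TensorProduct.smul_tmul, ← TensorProduct.add_tmul]
    congr 1
    apply Complex.ext <;> simp
  | add x y hx hy =>
    obtain ⟨a, b, rfl⟩ := hx
    obtain ⟨c, d, rfl⟩ := hy
    refine ⟨a + c, b + d, ?_⟩
    rw [TensorProduct.tmul_add, TensorProduct.tmul_add]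
    abel

theorem complex_smul_aux {W : Type*} [AddCommGroup W] [Module ℝ W] [Module ℂ W]
    [IsScalarTower ℝ ℂ W] (z : ℂ) (v : W) :
    z • v = z.re • v + Complex.I • (z.im • v) := by
  have h1 : ∀ r : ℝ, r • v = (r : ℂ) • v := fun r => by
    rw [← smul_one_smul ℂ r v]; simp
  rw [h1, h1, smul_smul, ← add_smul]
  congr 1
  apply Complex.ext <;> simp

theorem I_real_smul_aux {W : Type*} [AddCommGroup W] [Module ℝ W] [Module ℂ W]
    [IsScalarTower ℝ ℂ W] (r : ℝ) (v : W) :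
    Complex.I • (r • v) = r • (Complex.I • v) := by
  have h1 : ∀ v : W, r • v = (r : ℂ) • v := fun v => by
    rw [← smul_one_smul ℂ r v]; simp
  rw [h1, h1, smul_comm]

theorem I_I_smul_aux {W : Type*} [AddCommGroup W] [Module ℂ W] (v : W) :
    Complex.I • (Complex.I • v) = -v := by
  rw [smul_smul, Complex.I_mul_I, neg_one_smul]

theorem span_decomp_aux {W : Type*} [AddCommGroup W] [Module ℝ W] [Module ℂ W]
    [IsScalarTower ℝ ℂ W] (Vr : Submodule ℝ W) (w : W)
    (hw : w ∈ Submodule.span ℂ (Vr : Set W)) :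
    ∃ a ∈ Vr, ∃ b ∈ Vr, w = a + Complex.I • b := by
  induction hw using Submodule.span_induction with
  | mem x hx => exact ⟨x, hx, 0, Vr.zero_mem, by simp⟩
  | zero => exact ⟨0, Vr.zero_mem, 0, Vr.zero_mem, by simp⟩
  | add x y _ _ hx hy =>
    obtain ⟨a, ha, b, hb, rfl⟩ := hx
    obtain ⟨c, hc, d, hd, rfl⟩ := hy
    refine ⟨a + c, Vr.add_mem ha hc, b + d, Vr.add_mem hb hd, ?_⟩
    rw [smul_add]; abel
  | smul z x _ hx =>
    obtain ⟨a, ha, b, hb, rfl⟩ := hx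
    refine ⟨z.re • a - z.im • b, Vr.sub_mem (Vr.smul_mem _ ha) (Vr.smul_mem _ hb),
      z.im • a + z.re • b, Vr.add_mem (Vr.smul_mem _ ha) (Vr.smul_mem _ hb), ?_⟩
    rw [complex_smul_aux z]
    simp only [smul_add, I_real_smul_aux, I_I_smul_aux, smul_neg]
    abel

/-- For a complex vector space `W` and a real subspace `V_ℝ ⊆ W`, set
`V_ℂ := {v ∈ V_ℝ | i • v ∈ V_ℝ}` and `V := span_ℂ(V_ℝ)`.  Then `V_ℂ` is a complex
subspace of `W` contained in `V_ℝ`, and the canonical ℂ-linear map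
`ℂ ⊗[ℝ] (V_ℝ / V_ℂ) → V / V_ℂ` (`z ⊗ [v] ↦ [z • v]`) is bijective; i.e.
`(V, V_ℝ, V_ℂ)` is a general mixed super vector space. -/
theorem stmt_2 (W : Type*) [AddCommGroup W] [Module ℝ W] [Module ℂ W]
    [IsScalarTower ℝ ℂ W] (Vr : Submodule ℝ W) :
    {v : W | v ∈ Vr ∧ Complex.I • v ∈ Vr} ⊆ (Vr : Set W) ∧
    (∃ Vc : Submodule ℂ W, (Vc : Set W) = {v : W | v ∈ Vr ∧ Complex.I • v ∈ Vr}) ∧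
    (∀ Vc : Submodule ℂ W, (Vc : Set W) = {v : W | v ∈ Vr ∧ Complex.I • v ∈ Vr} →
      Function.Bijective
        (LinearMap.liftBaseChange ℂ
          (Submodule.liftQ ((Vc.restrictScalars ℝ).comap Vr.subtype)
            ((((Vc.comap (Submodule.span ℂ (Vr : Set W)).subtype).mkQ).restrictScalars ℝ).comp
              (((Submodule.restrictScalarsEquiv ℝ ℂ W
                    (Submodule.span ℂ (Vr : Set W))).toLinearMap.restrictScalars ℝ).comp
                (Submodule.inclusion
                  (fun _ hx => Submodule.subset_span hx :
                    Vr ≤ (Submodule.span ℂ (Vr : Set W)).restrictScalars ℝ))))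
            (fun x hx =>
              LinearMap.mem_ker.mpr ((Submodule.Quotient.mk_eq_zero _).mpr hx))))) := by
  refine ⟨fun v hv => hv.1, ⟨{ carrier := {v : W | v ∈ Vr ∧ Complex.I • v ∈ Vr}, add_mem' := ?_, zero_mem' := ?_, smul_mem' := ?_ }, rfl⟩, ?_⟩
  · rintro a b ⟨ha, ha'⟩ ⟨hb, hb'⟩
    exact ⟨Vr.add_mem ha hb, by rw [smul_add]; exact Vr.add_mem ha' hb'⟩
  · exact ⟨Vr.zero_mem, by simp⟩
  · rintro z v ⟨hv, hv'⟩
    refine ⟨?_, ?_⟩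
    · rw [complex_smul_aux, I_real_smul_aux]
      exact Vr.add_mem (Vr.smul_mem _ hv) (Vr.smul_mem _ hv')
    · rw [complex_smul_aux z, smul_add, I_I_smul_aux, I_real_smul_aux]
      exact Vr.add_mem (Vr.smul_mem _ hv') (Vr.neg_mem (Vr.smul_mem _ hv))
  intro Vc hVc
  have mem : ∀ v : W, v ∈ Vc ↔ v ∈ Vr ∧ Complex.I • v ∈ Vr := fun v => by
    rw [← SetLike.mem_coe, hVc]; rfl
  constructor
  · rw [injective_iff_map_eq_zero]
    intro t ht
    obtain ⟨a, b, rfl⟩ := tensor_decomp_aux _ t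
    obtain ⟨a, rfl⟩ := Submodule.Quotient.mk_surjective _ a
    obtain ⟨b, rfl⟩ := Submodule.Quotient.mk_surjective _ b
    rw [map_add, LinearMap.liftBaseChange_tmul, LinearMap.liftBaseChange_tmul, one_smul] at ht
    have h : (a : W) + Complex.I • (b : W) ∈ Vc :=
      (Submodule.Quotient.mk_eq_zero (Vc.comap (Submodule.span ℂ (Vr : Set W)).subtype)
        (x := (⟨a, Submodule.subset_span a.2⟩ : Submodule.span ℂ (Vr : Set W)) +
          Complex.I • (⟨b, Submodule.subset_span b.2⟩ : Submodule.span ℂ (Vr : Set W)))).mp ht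
    obtain ⟨h1, h2⟩ := (mem _).mp h
    rw [smul_add, I_I_smul_aux] at h2
    have hb : (b : W) ∈ Vc := (mem _).mpr ⟨b.2, (Vr.add_mem_iff_right a.2).mp h1⟩
    have ha : (a : W) ∈ Vc :=
      (mem _).mpr ⟨a.2, (Vr.add_mem_iff_left (Vr.neg_mem b.2)).mp h2⟩
    have ha' : (Submodule.Quotient.mk a : Vr ⧸ (Vc.restrictScalars ℝ).comap Vr.subtype) = 0 :=
      (Submodule.Quotient.mk_eq_zero _).mpr ha
    have hb' : (Submodule.Quotient.mk b : Vr ⧸ (Vc.restrictScalars ℝ).comap Vr.subtype) = 0 :=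
      (Submodule.Quotient.mk_eq_zero _).mpr hb
    rw [ha', hb', TensorProduct.tmul_zero, TensorProduct.tmul_zero, add_zero]
  · intro q
    obtain ⟨⟨w, hw⟩, rfl⟩ := Submodule.Quotient.mk_surjective _ q
    obtain ⟨a, ha, b, hb, rfl⟩ := span_decomp_aux Vr w hw
    refine ⟨(1 : ℂ) ⊗ₜ[ℝ] Submodule.Quotient.mk ⟨a, ha⟩ +
      Complex.I ⊗ₜ[ℝ] Submodule.Quotient.mk ⟨b, hb⟩, ?_⟩
    rw [map_add, LinearMap.liftBaseChange_tmul, LinearMap.liftBaseChange_tmul, one_smul]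
    rfl
end

section
/- Let V be a complex vector space, V_ℝ ⊆ V a real subspace, and V_ℂ ⊆ V a complex subspace with V_ℂ ⊆ V_ℝ. Suppose the canonical ℂ-linear map ℂ ⊗[ℝ] (V_ℝ / V_ℂ) → V / V_ℂ (induced by z ⊗ [v] ↦ [z • v]) is bijective. Then V_ℂ = {v ∈ V_ℝ | i • v ∈ V_ℝ} and V = span_ℂ(V_ℝ). In particular, the pair (V, V_ℝ) determines V_ℂ. -/
open TensorProduct

/-- Let `V` be a complex vector space, `V_ℝ ⊆ V` a real subspace and `V_ℂ ⊆ V` a complex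
subspace with `V_ℂ ⊆ V_ℝ`.  If the canonical ℂ-linear map
`ℂ ⊗[ℝ] (V_ℝ / V_ℂ) → V / V_ℂ` (`z ⊗ [v] ↦ [z • v]`) is bijective, then
`V_ℂ = {v ∈ V_ℝ | i • v ∈ V_ℝ}` and `V = span_ℂ(V_ℝ)`; in particular the pair
`(V, V_ℝ)` determines `V_ℂ`. -/
theorem stmt_3 (V : Type*) [AddCommGroup V] [Module ℝ V] [Module ℂ V]
    [IsScalarTower ℝ ℂ V] (Vr : Submodule ℝ V) (Vc : Submodule ℂ V)
    (hsub : (Vc : Set V) ⊆ (Vr : Set V))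
    (hbij : Function.Bijective
      (LinearMap.liftBaseChange ℂ
        (Submodule.liftQ ((Vc.restrictScalars ℝ).comap Vr.subtype)
          ((Vc.mkQ.restrictScalars ℝ).comp Vr.subtype)
          (fun x hx =>
            LinearMap.mem_ker.mpr ((Submodule.Quotient.mk_eq_zero _).mpr hx))))) :
    (Vc : Set V) = {v : V | v ∈ Vr ∧ Complex.I • v ∈ Vr} ∧
    Submodule.span ℂ (Vr : Set V) = ⊤ := by
  refine ⟨?_, ?_⟩
  · ext v
    constructor
    · intro hv
      exact ⟨hsub hv, hsub (Vc.smul_mem _ hv)⟩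
    · rintro ⟨h1, h2⟩
      have key : (Complex.I ⊗ₜ[ℝ] (Submodule.Quotient.mk (⟨v, h1⟩ : Vr) :
            Vr ⧸ ((Vc.restrictScalars ℝ).comap Vr.subtype))) =
          ((1 : ℂ) ⊗ₜ[ℝ] (Submodule.Quotient.mk (⟨Complex.I • v, h2⟩ : Vr))) := by
        apply hbij.1
        rw [LinearMap.liftBaseChange_tmul, LinearMap.liftBaseChange_tmul, one_smul]
        rfl
      have h3 := congrArg (fun t => TensorProduct.lid ℝ _
        (LinearMap.rTensor _ Complex.imLm t)) key
      simp only [LinearMap.rTensor_tmul, TensorProduct.lid_tmul, Complex.imLm_coe,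
        Complex.I_im, Complex.one_im, one_smul, zero_smul] at h3
      have h6 := (Submodule.Quotient.mk_eq_zero _).mp h3
      exact h6
  · rw [eq_top_iff]
    intro v _
    obtain ⟨t, ht⟩ := hbij.2 (Vc.mkQ v)
    have hm : Vc.mkQ v ∈ (Submodule.span ℂ (Vr : Set V)).map Vc.mkQ := by
      rw [← ht]
      clear ht
      induction t using TensorProduct.induction_on with
      | zero => rw [map_zero]; exact Submodule.zero_mem _
      | add x y hx hy => rw [map_add]; exact Submodule.add_mem _ hx hy
      | tmul z x =>
        rw [LinearMap.liftBaseChange_tmul]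
        apply Submodule.smul_mem
        obtain ⟨x, rfl⟩ := Submodule.Quotient.mk_surjective _ x
        exact ⟨x, Submodule.subset_span x.2, rfl⟩
    obtain ⟨s, hs, hsv⟩ := hm
    have h4 : v - s ∈ Vc := (Submodule.Quotient.eq _).mp hsv.symm
    have h5 := Submodule.add_mem _ (Submodule.subset_span (R := ℂ) (hsub h4)) hs
    simpa using h5
end

section
/- Let ι be a type and ε : ι → ℤ/2ℤ a parity function, and let T : ι → ι → ι → ℂ. Suppose that for all i, j, k ∈ ι: (1) T i j k = (−1)^{ε(i)·ε(j)} · T j i k, and (2) T i j k = −(−1)^{ε(j)·ε(k)} · T i k j, where (−1)^{a} for a ∈ ℤ/2ℤ denotes 1 if a = 0 and −1 if a = 1. Then T i j k = 0 for all i, j, k. (This is the coordinate form of the statement that the first prolongation 𝔬𝔰𝔭(V,J)^{(1)} of the orthosymplectic Lie superalgebra vanishes: writing T^i_{jk} = J(T(v_i)v_j, v_k) in a homogeneous basis {v_i} of parities ε(i), the supersymmetry of T gives condition (1) and membership of each T(v_i) in 𝔬𝔰𝔭(V,J) gives condition (2); the same sign conditions arise for the periplectic algebra 𝔭(V,J),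 so the lemma also yields 𝔭(V,J)^{(1)} = 0.) -/
/-- Coordinate form of `𝔬𝔰𝔭(V,J)^{(1)} = 0` (and `𝔭(V,J)^{(1)} = 0`):
if `T i j k` is supersymmetric in the first two indices, `T i j k = (−1)^{ε i ε j} T j i k`,
and super-antisymmetric in the last two, `T i j k = −(−1)^{ε j ε k} T i k j`,
then `T` vanishes. -/
theorem stmt_4 {ι : Type*} (ε : ι → ZMod 2) (T : ι → ι → ι → ℂ)
    (h1 : ∀ i j k, T i j k = (if ε i * ε j = 0 then (1 : ℂ) else -1) * T j i k)
    (h2 : ∀ i j k, T i j k = -((if ε j * ε k = 0 then (1 : ℂ) else -1) * T i k j)) :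
    ∀ i j k, T i j k = 0 := by
  intro i j k
  have a := h1 i j k
  have b := h2 j i k
  have c := h1 j k i
  have d := h2 k j i
  have e := h1 k i j
  have f := h2 i k j
  rw [mul_comm (ε j) (ε i)] at d
  rw [mul_comm (ε k) (ε i)] at e
  rw [mul_comm (ε k) (ε j)] at f
  split_ifs at a b c d e f <;> grind
end

section
/- Let n ≥ 3, let Q be a quadratic form on a real vector space V₀, and let e : Fin n → V₀ satisfy: the polar form of Q vanishes on distinct basis vectors (polar Q (e i) (e j) = 0 for i ≠ j) and Q(e i) ≠ 0 for all i. Let M be a module over the Clifford algebra CliffordAlgebra Q, and let s : Fin n → M satisfy ι(e i) • (s j) = ι(e j) • (s i) for all i, j, where ι : V₀ → CliffordAlgebra Q is the canonical embedding. Then s j = 0 for all j. (This is the computation showing that the geometric structure with group Spin(V₀) ⋉ W, where W = {f_s : V₀ → V₁, f_s(v) = v · s | s ∈ V₁} inside Hom(V₀, V₁) for a Clifford module V₁, is of finite type provided dim ≥ 3.) -/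
/-- Finite-type computation for the superization of a Riemannian spin manifold:
if `n ≥ 3`, `e 0, …, e (n-1)` is an orthogonal family with `Q (e i) ≠ 0`, `M` is a
module over the Clifford algebra of `Q`, and spinors `s i` satisfy
`ι(e i) • s j = ι(e j) • s i` for all `i, j`, then all `s j` vanish. -/
theorem stmt_6 (n : ℕ) (hn : 3 ≤ n) (V₀ : Type*) [AddCommGroup V₀] [Module ℝ V₀]
    (Q : QuadraticForm ℝ V₀) (e : Fin n → V₀)
    (horth : ∀ i j, i ≠ j → QuadraticMap.polar (⇑Q) (e i) (e j) = 0)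
    (hQ : ∀ i, Q (e i) ≠ 0)
    (M : Type*) [AddCommGroup M] [Module (CliffordAlgebra Q) M]
    (s : Fin n → M)
    (hs : ∀ i j, CliffordAlgebra.ι Q (e i) • s j = CliffordAlgebra.ι Q (e j) • s i) :
    ∀ j, s j = 0 := by
  intro j
  have hex : ∃ i k : Fin n, i ≠ j ∧ k ≠ j ∧ i ≠ k := by
    have h2 : 1 < (Finset.univ.erase j).card := by
      rw [Finset.card_erase_of_mem (Finset.mem_univ j), Finset.card_univ, Fintype.card_fin]
      omega
    obtain ⟨i, hi, k, hk, hik⟩ := Finset.one_lt_card.mp h2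
    exact ⟨i, k, Finset.ne_of_mem_erase hi, Finset.ne_of_mem_erase hk, hik⟩
  obtain ⟨i, k, hij, hkj, hik⟩ := hex
  have anti : ∀ p q, p ≠ q → CliffordAlgebra.ι Q (e p) * CliffordAlgebra.ι Q (e q)
      = -(CliffordAlgebra.ι Q (e q) * CliffordAlgebra.ι Q (e p)) := by
    intro p q hpq
    rw [eq_neg_iff_add_eq_zero, CliffordAlgebra.ι_mul_ι_add_swap, horth p q hpq, map_zero]
  have inj : ∀ p (x : M), CliffordAlgebra.ι Q (e p) • x = 0 → x = 0 := by
    intro p x hx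
    have h1 : algebraMap ℝ (CliffordAlgebra Q) (Q (e p)) • x = 0 := by
      rw [← CliffordAlgebra.ι_sq_scalar, mul_smul, hx, smul_zero]
    have h2 : algebraMap ℝ (CliffordAlgebra Q) (Q (e p))⁻¹ •
        algebraMap ℝ (CliffordAlgebra Q) (Q (e p)) • x = 0 := by rw [h1, smul_zero]
    rwa [← mul_smul, ← map_mul, inv_mul_cancel₀ (hQ p), map_one, one_smul] at h2
  have two : ∀ x : M, x = -x → x = 0 := by
    intro x hx
    have h1 : algebraMap ℝ (CliffordAlgebra Q) 2 • x = 0 := by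
      rw [← one_add_one_eq_two, map_add, map_one, add_smul, one_smul]
      exact eq_neg_iff_add_eq_zero.mp hx
    have h2 : algebraMap ℝ (CliffordAlgebra Q) (2⁻¹ : ℝ) •
        algebraMap ℝ (CliffordAlgebra Q) 2 • x = 0 := by rw [h1, smul_zero]
    rwa [← mul_smul, ← map_mul, inv_mul_cancel₀ two_ne_zero, map_one, one_smul] at h2
  have swap : ∀ p q, p ≠ q → ∀ x : M, CliffordAlgebra.ι Q (e p) • CliffordAlgebra.ι Q (e q) • x
      = -(CliffordAlgebra.ι Q (e q) • CliffordAlgebra.ι Q (e p) • x) := by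
    intro p q hpq x
    rw [← mul_smul, anti p q hpq, neg_smul, mul_smul]
  refine inj i _ (inj k _ (two _ ?_))
  calc CliffordAlgebra.ι Q (e k) • CliffordAlgebra.ι Q (e i) • s j
      = CliffordAlgebra.ι Q (e k) • CliffordAlgebra.ι Q (e j) • s i := by rw [hs i j]
    _ = -(CliffordAlgebra.ι Q (e j) • CliffordAlgebra.ι Q (e k) • s i) := swap k j hkj _
    _ = -(CliffordAlgebra.ι Q (e j) • CliffordAlgebra.ι Q (e i) • s k) := by rw [hs k i]
    _ = CliffordAlgebra.ι Q (e i) • CliffordAlgebra.ι Q (e j) • s k := (swap i j hij _).symm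
    _ = CliffordAlgebra.ι Q (e i) • CliffordAlgebra.ι Q (e k) • s j := by rw [hs j k]
    _ = -(CliffordAlgebra.ι Q (e k) • CliffordAlgebra.ι Q (e i) • s j) := swap i k hik _
end

section
/- Let n ≥ 3, let Q be a quadratic form on a real vector space V₀, and let e : Fin n → V₀ satisfy: the polar form of Q vanishes on distinct basis vectors (polar Q (e i) (e j) = 0 for i ≠ j) and Q(e i) ≠ 0 for all i. Let M be a module over CliffordAlgebra Q, and let s : Fin n → M satisfy ι(e i) • (s j) = ι(e j) • (s i) for all i, j, where ι : V₀ → CliffordAlgebra Q is the canonical embedding. Then for all j ≠ k one has (ι(e j) * ι(e k)) • (s j) = 0. -/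
/-- Key intermediate identity in the finite-type computation for the superization of a
Riemannian spin manifold: if `n ≥ 3`, the `e i` form an orthogonal family with
`Q (e i) ≠ 0`, and spinors `s i` satisfy `ι(e i) • s j = ι(e j) • s i` for all `i, j`,
then `(ι(e j) * ι(e k)) • s j = 0` for all `j ≠ k`. -/
theorem stmt_8 (n : ℕ) (hn : 3 ≤ n) (V₀ : Type*) [AddCommGroup V₀] [Module ℝ V₀]
    (Q : QuadraticForm ℝ V₀) (e : Fin n → V₀)
    (horth : ∀ i j, i ≠ j → QuadraticMap.polar (⇑Q) (e i) (e j) = 0)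
    (hQ : ∀ i, Q (e i) ≠ 0)
    (M : Type*) [AddCommGroup M] [Module (CliffordAlgebra Q) M]
    (s : Fin n → M)
    (hs : ∀ i j, CliffordAlgebra.ι Q (e i) • s j = CliffordAlgebra.ι Q (e j) • s i) :
    ∀ j k, j ≠ k → (CliffordAlgebra.ι Q (e j) * CliffordAlgebra.ι Q (e k)) • s j = 0 := by
  intro j k hjk
  obtain ⟨i, hij, hik⟩ : ∃ i : Fin n, i ≠ j ∧ i ≠ k := by
    have hc : ({j, k} : Finset (Fin n)).card < Fintype.card (Fin n) := by
      rw [Fintype.card_fin]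
      exact lt_of_le_of_lt Finset.card_le_two (by omega)
    obtain ⟨i, hi⟩ := Finset.exists_mem_notMem_of_card_lt_card
      (s := ({j, k} : Finset (Fin n))) (t := Finset.univ) (by simpa using hc)
    simp only [Finset.mem_insert, Finset.mem_singleton, not_or] at hi
    exact ⟨i, hi.2.1, hi.2.2⟩
  have anti : ∀ a b, a ≠ b → ∀ m : M, CliffordAlgebra.ι Q (e a) • CliffordAlgebra.ι Q (e b) • m
      = -(CliffordAlgebra.ι Q (e b) • CliffordAlgebra.ι Q (e a) • m) := by
    intro a b hab m
    have h := CliffordAlgebra.ι_mul_ι_add_swap (Q := Q) (e a) (e b)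
    rw [horth a b hab, map_zero] at h
    rw [smul_smul, smul_smul, eq_neg_iff_add_eq_zero, ← add_smul, h, zero_smul]
  have cancel : ∀ r : ℝ, r ≠ 0 → ∀ m : M,
      algebraMap ℝ (CliffordAlgebra Q) r • m = 0 → m = 0 := by
    intro r hr m h
    have h2 := congrArg (fun x => algebraMap ℝ (CliffordAlgebra Q) r⁻¹ • x) h
    simpa only [smul_smul, ← map_mul, inv_mul_cancel₀ hr, map_one, one_smul, smul_zero] using h2
  have cι : ∀ a, ∀ m : M, CliffordAlgebra.ι Q (e a) • m = 0 → m = 0 := by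
    intro a m h
    apply cancel _ (hQ a)
    rw [← CliffordAlgebra.ι_sq_scalar, mul_smul, h, smul_zero]
  have hT : CliffordAlgebra.ι Q (e i) • CliffordAlgebra.ι Q (e j) • s k
      = -(CliffordAlgebra.ι Q (e i) • CliffordAlgebra.ι Q (e j) • s k) := by
    calc _ = -(CliffordAlgebra.ι Q (e j) • CliffordAlgebra.ι Q (e i) • s k) := anti i j hij _
      _ = -(CliffordAlgebra.ι Q (e j) • CliffordAlgebra.ι Q (e k) • s i) := by rw [hs i k]
      _ = CliffordAlgebra.ι Q (e k) • CliffordAlgebra.ι Q (e j) • s i := by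
        rw [anti j k hjk, neg_neg]
      _ = CliffordAlgebra.ι Q (e k) • CliffordAlgebra.ι Q (e i) • s j := by rw [hs j i]
      _ = -(CliffordAlgebra.ι Q (e i) • CliffordAlgebra.ι Q (e k) • s j) := anti k i hik.symm _
      _ = _ := by rw [hs k j]
  have hT0 : CliffordAlgebra.ι Q (e i) • CliffordAlgebra.ι Q (e j) • s k = 0 := by
    apply cancel 2 two_ne_zero
    rw [map_ofNat, two_smul]
    exact eq_neg_iff_add_eq_zero.mp hT
  rw [mul_smul, hs k j, cι j _ (cι i _ hT0), smul_zero, smul_zero]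
end
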